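/- Let R be a commutative ring with identity, M a unitary R-module, and S a multiplicative closed set in R such that S(K) ∩ S = ∅ for every proper submodule K of M. Then M is a local R-module if and only if M_S is a local R_S-module. -/

import Mathlib

/-- `S(K)` for a submodule `K` of an `R`-module `M`: the set of elements of `R` not prime
to `K`. -/
def notPrimeTo {R : Type*} [CommRing R] {M : Type*} [AddCommGroup M] [Module R M]
    (K : Submodule R M) : Set R :=
  {r : R | ∃ m : M, m ∉ K ∧ r • m ∈ K}

/-- A module `M` is *local* if it has a largest proper submodule. -/
def IsLocalModule (R M : Type*) [CommRing R] [AddCommGroup M] [Module R M] : Prop :=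
  ∃ L : Submodule R M, L ≠ ⊤ ∧ ∀ K : Submodule R M, K ≠ ⊤ → K ≤ L

/-!
Extension `K ↦ K_S` and contraction along `M → M_S` always form a Galois insertion of the submodules
of `M_S` into those of `M`, and the contraction of `K_S` is `{m | ∃ s ∈ S, s • m ∈ K}`. Disjointness
of `S(K)` from `S` says that this set is `K`, so under the hypothesis the Galois insertion is an
isomorphism of submodule lattices, and being local only depends on the submodule lattice.
-/

section NotPrimeTo

variable {R M : Type*} [CommRing R] [AddCommGroup M] [Module R M]

theorem notPrimeTo_inter_eq_empty_iff {K : Submodule R M} {S : Set R} :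
    notPrimeTo K ∩ S = ∅ ↔ ∀ s ∈ S, ∀ m, s • m ∈ K → m ∈ K := by
  rw [← Set.disjoint_iff_inter_eq_empty, Set.disjoint_right]
  refine forall₂_congr fun s _ ↦ ?_
  simp only [notPrimeTo, Set.mem_ofPred_eq, not_exists, not_and', not_not]

theorem notPrimeTo_top : notPrimeTo (⊤ : Submodule R M) = ∅ := by
  simp [notPrimeTo]

end NotPrimeTo

section LocalizedSubmodule

variable {R M N : Type*} (A : Type*) [CommSemiring R] [CommSemiring A] [Algebra R A]
  [AddCommMonoid M] [Module R M] [AddCommMonoid N] [Module R N] [Module A N] [IsScalarTower R A N]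
  (S : Submonoid R) [IsLocalization S A] (f : M →ₗ[R] N) [IsLocalizedModule S f]

theorem map_mem_localized'_iff {K : Submodule R M} {m : M} :
    f m ∈ K.localized' A S f ↔ ∃ s ∈ S, s • m ∈ K := by
  rw [Submodule.mem_localized']
  constructor
  · rintro ⟨k, hk, s, hks⟩
    rw [IsLocalizedModule.mk'_eq_iff, ← LinearMap.map_smul_of_tower] at hks
    obtain ⟨t, ht⟩ := (IsLocalizedModule.eq_iff_exists S f).1 hks
    refine ⟨t * s, mul_mem t.2 s.2, ?_⟩
    have htsm : ((t : R) * s) • m = t • k := (mul_smul ..).trans ht.symm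
    exact htsm ▸ K.smul_mem (t : R) hk
  · rintro ⟨s, hs, hsm⟩
    exact ⟨s • m, hsm, ⟨s, hs⟩, IsLocalizedModule.mk'_eq_iff.2 (f.map_smul s m)⟩

theorem comap_localized'_eq_self {K : Submodule R M}
    (hK : ∀ s ∈ S, ∀ m, s • m ∈ K → m ∈ K) :
    ((K.localized' A S f).restrictScalars R).comap f = K := by
  ext m
  rw [Submodule.mem_comap, Submodule.restrictScalars_mem, map_mem_localized'_iff]
  exact ⟨fun ⟨s, hs, hsm⟩ ↦ hK s hs m hsm, fun hm ↦ ⟨1, S.one_mem, by rwa [one_smul]⟩⟩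

/-- Extension and contraction of submodules along a localization map `f : M → N`, as mutually
inverse order isomorphisms, when every submodule of `M` is saturated with respect to `S`. -/
def localizedOrderIso (hS : ∀ K : Submodule R M, ∀ s ∈ S, ∀ m, s • m ∈ K → m ∈ K) :
    Submodule R M ≃o Submodule A N where
  toFun K := K.localized' A S f
  invFun P := (P.restrictScalars R).comap f
  left_inv K := comap_localized'_eq_self A S f (hS K)
  right_inv := (Submodule.localized'gi A S f).l_u_eq
  map_rel_iff' {K L} := by
    simp only [Equiv.coe_fn_mk]
    rw [(Submodule.localized'gi A S f).gc.le_iff_le, comap_localized'_eq_self A S f (hS L)]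

end LocalizedSubmodule

section IsLocalModule

variable {R M A N : Type*} [CommRing R] [AddCommGroup M] [Module R M]
  [CommRing A] [AddCommGroup N] [Module A N]

theorem IsLocalModule.of_orderIso (e : Submodule R M ≃o Submodule A N) (h : IsLocalModule R M) :
    IsLocalModule A N := by
  obtain ⟨L, hL, hmax⟩ := h
  refine ⟨e L, (map_eq_top_iff e).not.2 hL, fun P hP ↦ ?_⟩
  exact e.symm_apply_le.1 (hmax _ ((map_eq_top_iff e.symm).not.2 hP))

theorem isLocalModule_iff_of_orderIso (e : Submodule R M ≃o Submodule A N) :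
    IsLocalModule R M ↔ IsLocalModule A N :=
  ⟨.of_orderIso e, .of_orderIso e.symm⟩

theorem isLocalModule_iff_localized_general [Algebra R A] [Module R N] [IsScalarTower R A N]
    (S : Submonoid R) [IsLocalization S A] (f : M →ₗ[R] N) [IsLocalizedModule S f]
    (hS : ∀ K : Submodule R M, K ≠ ⊤ → notPrimeTo K ∩ (S : Set R) = ∅) :
    IsLocalModule R M ↔ IsLocalModule A N := by
  have saturated (K : Submodule R M) : ∀ s ∈ S, ∀ m, s • m ∈ K → m ∈ K := by
    apply notPrimeTo_inter_eq_empty_iff.1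
    obtain rfl | hK := eq_or_ne K ⊤
    · rw [notPrimeTo_top, Set.empty_inter]
    · exact hS K hK
  exact isLocalModule_iff_of_orderIso (localizedOrderIso A S f saturated)

end IsLocalModule

/-- Proposition 3.24 (3): let `S` be a multiplicative closed set in `R` with `S(K) ∩ S = ∅`
for every proper submodule `K` of `M`.  Then `M` is a local `R`-module iff `M_S` is a local
`R_S`-module. -/
theorem isLocalModule_iff_localized {R : Type*} [CommRing R] {M : Type*} [AddCommGroup M]
    [Module R M] (S : Submonoid R)
    (hS : ∀ K : Submodule R M, K ≠ ⊤ → notPrimeTo K ∩ (S : Set R) = ∅) :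
    IsLocalModule R M ↔ IsLocalModule (Localization S) (LocalizedModule S M) :=
  isLocalModule_iff_localized_general S (LocalizedModule.mkLinearMap S M) hS
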